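/- For every integer a ≥ 3 and every integer t ≥ 2a³ + 2a² + 1, we have φ(t) ≥ a. -/

import Mathlib

open Finset Matrix

/-- The sign `[T : e]` of an edge `e` in a triangle `T`. -/
noncomputable def triSign (T e : Finset ℕ) : ℝ :=
  if e ⊆ T ∧ e.card = 2 ∧ T.card = 3 then
    if (T \ e).max = T.max ∨ (T \ e).min = T.min then 1 else -1
  else 0

/-- A triangle family: a nonempty finite set of 3-element subsets of ℕ. -/
def IsTriFam (F : Finset (Finset ℕ)) : Prop :=
  F.Nonempty ∧ ∀ T ∈ F, T.card = 3

/-- The edges of the support graph of a triangle family. -/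
def edgesOf (F : Finset (Finset ℕ)) : Finset (Finset ℕ) :=
  F.biUnion fun T => T.powersetCard 2

/-- The vertices of the support graph of a triangle family. -/
def vertsOf (F : Finset (Finset ℕ)) : Finset ℕ :=
  F.biUnion id

/-- The signed edge-triangle incidence matrix of a triangle family. -/
noncomputable def delta1 (F : Finset (Finset ℕ)) :
    Matrix {T // T ∈ F} {e // e ∈ edgesOf F} ℝ :=
  Matrix.of fun T e => triSign T.1 e.1

/-- The smallest positive eigenvalue of a matrix. -/
noncomputable def lambdaMinPos {m : Type*} [Fintype m] (M : Matrix m m ℝ) : ℝ :=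
  sInf {μ : ℝ | 0 < μ ∧ ∃ v : m → ℝ, v ≠ 0 ∧ M.mulVec v = μ • v}

/-- `λ(𝒯)`: the smallest positive eigenvalue of `δ₁(𝒯)ᵀ δ₁(𝒯)`. -/
noncomputable def lam (F : Finset (Finset ℕ)) : ℝ :=
  lambdaMinPos ((delta1 F)ᵀ * delta1 F)

/-- The neighborhood of `x` in the support graph `Γ₀(F)`. -/
def nbrs (F : Finset (Finset ℕ)) (x : ℕ) : Finset ℕ :=
  (vertsOf F).filter fun y => x ≠ y ∧ ∃ T ∈ F, x ∈ T ∧ y ∈ T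

/-- `φ(t)`: the maximum of `λ(𝒯)` over triangle families with `|𝒯| = t`. -/
noncomputable def phi (t : ℕ) : ℝ :=
  sSup {r : ℝ | ∃ F : Finset (Finset ℕ), IsTriFam F ∧ F.card = t ∧ lam F = r}

/-- `Λ(t) = max_{1 ≤ s ≤ t} φ(s)`. -/
noncomputable def Lam (t : ℕ) : ℝ :=
  sSup {r : ℝ | ∃ s : ℕ, 1 ≤ s ∧ s ≤ t ∧ phi s = r}

/-- `H(n) = min{ s ≥ 1 : φ(C(n,3)+s) > n - 1 }`. -/
noncomputable def Hfun (n : ℕ) : ℕ :=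
  sInf {s : ℕ | 1 ≤ s ∧ (n : ℝ) - 1 < phi (n.choose 3 + s)}

/-- The triangle family `𝒯_{c,b}`: all 3-cliques of `K_c ∨ (b isolated vertices)`. -/
def Tcb (c b : ℕ) : Finset (Finset ℕ) :=
  ((Finset.Icc 1 c).powersetCard 3) ∪
    (Finset.Icc (c+1) (c+b)).biUnion
      (fun i => ((Finset.Icc 1 c).powersetCard 2).image (fun p => insert i p))

/-!
An eigenvector of `δ₁ᵀ δ₁` is the same as an alternating function `f` on ordered pairs of vertices
with `μ f(x, y) = ∑ (f(x, y) + f(y, z) + f(z, x))`, summed over the triangles `{x, y, z}`. If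
`μ ≠ 0`, then `f` is divergence free: `∑ f(x, y) = 0` over all `y`. On the join of `K_c` with `b`
isolated vertices the last two terms of the equation therefore cancel: it reads `μ f = (c + b) f`
on the edges of `K_c` and, if `f` vanishes there, `μ f = c f` on the other edges. So every nonzero
eigenvalue is `c` or `c + b`, and a vertex-disjoint union of joins whose cliques have at least `a`
vertices has `λ ≥ a`.

With cliques of `a`, `a + 1` and `a + 2` vertices such a union has
`∑ (C(a + j, 3) + b_j C(a + j, 2))` triangles, where the `b_j` are free. The three numbers
`p, q, r = C(a + j, 2)` have greatest common divisor 1, so that every integer from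
`lcm(p, q) + gcd(p, q) r` on is a combination of them with natural coefficients.
-/

section CoinProblem

theorem exists_mul_add_mul_eq_of_lcm_le {p q n : ℕ} (hdvd : p.gcd q ∣ n) (hle : p.lcm q ≤ n) :
    ∃ x y, x * p + y * q = n := by
  rcases Nat.eq_zero_or_pos (p.gcd q) with hg | hg
  · obtain rfl : n = 0 := Nat.eq_zero_of_zero_dvd (hg ▸ hdvd)
    exact ⟨0, 0, by simp⟩
  obtain ⟨p', q', hcop, hp, hq⟩ := Nat.exists_coprime p q
  obtain ⟨m, rfl⟩ := hdvd
  have hlcm : p.lcm q = p.gcd q * (p' * q') := by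
    apply Nat.eq_of_mul_eq_mul_left hg
    calc p.gcd q * p.lcm q = p * q := Nat.gcd_mul_lcm p q
      _ = (p' * p.gcd q) * (q' * p.gcd q) := by rw [← hp, ← hq]
      _ = _ := by ring
  have hm : p'.pred * q'.pred ≤ m :=
    (Nat.mul_le_mul (Nat.pred_le _) (Nat.pred_le _)).trans
      (Nat.le_of_mul_le_mul_left (hlcm ▸ hle) hg)
  obtain ⟨x, y, hxy⟩ := Nat.exists_add_mul_eq_of_gcd_dvd_of_mul_pred_le p' q' m (by simp [hcop]) hm
  refine ⟨x, y, ?_⟩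
  calc x * p + y * q = x * (p' * p.gcd q) + y * (q' * p.gcd q) := by rw [← hp, ← hq]
    _ = p.gcd q * (x * p' + y * q') := by ring
    _ = p.gcd q * m := by rw [hxy]

theorem exists_mul_add_mul_add_mul_eq_of_lcm_add_le {p q r n : ℕ} (hcop : (p.gcd q).Coprime r)
    (hle : p.lcm q + p.gcd q * r ≤ n) : ∃ x y z, x * p + y * q + z * r = n := by
  obtain ⟨m, z, hm⟩ := Nat.exists_add_mul_eq_of_gcd_dvd_of_mul_pred_le (p.gcd q) r (n - p.lcm q)
    (by simp [hcop]) ((Nat.mul_le_mul (Nat.pred_le _) (Nat.pred_le _)).trans (by lia))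
  obtain ⟨x, y, hxy⟩ := exists_mul_add_mul_eq_of_lcm_le (p := p) (q := q)
    (n := m * p.gcd q + p.lcm q)
    ((Nat.dvd_mul_left _ _).add ((Nat.gcd_dvd_left p q).trans (Nat.dvd_lcm_left p q)))
    (Nat.le_add_left _ _)
  exact ⟨x, y, z, by lia⟩

theorem choose_succ_two (n : ℕ) : (n + 1).choose 2 = n + n.choose 2 := by
  rw [Nat.choose_succ_succ' n 1, Nat.choose_one_right]

theorem two_mul_choose_two_add (n : ℕ) : 2 * n.choose 2 + n = n ^ 2 := by
  have h := Nat.add_one_mul_choose_eq n 1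
  rw [Nat.choose_one_right, choose_succ_two] at h
  lia

theorem three_mul_choose_three_add (n : ℕ) :
    3 * n.choose 3 + 2 * n.choose 2 = n * n.choose 2 := by
  have h := Nat.add_one_mul_choose_eq n 2
  rw [Nat.choose_succ_succ' n 2] at h
  lia

theorem gcd_choose_two_dvd (a : ℕ) : (a.choose 2).gcd ((a + 1).choose 2) ∣ a := by
  rw [choose_succ_two, Nat.gcd_add_self_right]
  exact Nat.gcd_dvd_right ..

theorem coprime_gcd_choose_two (a : ℕ) :
    ((a.choose 2).gcd ((a + 1).choose 2)).Coprime ((a + 2).choose 2) := by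
  obtain ⟨k, hk⟩ := Nat.gcd_dvd_right (a.choose 2) ((a + 1).choose 2)
  rw [choose_succ_two (a + 1)]
  nth_rw 2 [hk]
  rw [Nat.coprime_add_mul_left_right]
  exact Nat.Coprime.coprime_dvd_left (gcd_choose_two_dvd a) (by simp)

theorem lcm_choose_two_le (a : ℕ) :
    (a.choose 2).lcm ((a + 1).choose 2) ≤ (a + 1) * a.choose 2 := by
  rcases (a.choose 2).eq_zero_or_pos with h0 | hpos
  · simp [h0]
  obtain _ | n := a
  · simp at hpos
  refine Nat.le_of_dvd (by positivity) (Nat.lcm_dvd (Nat.dvd_mul_left ..) ⟨n, ?_⟩)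
  have h := two_mul_choose_two_add (n + 1)
  rw [choose_succ_two (n + 1)]
  lia

theorem exists_sum_choose_eq {a t : ℕ} (ha : 1 ≤ a) (ht : 3 * a ^ 3 + 3 * a ^ 2 + 2 * a ≤ 2 * t) :
    ∃ b : ℕ → ℕ, ∑ j ∈ range 3, ((a + j).choose 3 + b j * (a + j).choose 2) = t := by
  have h2 := two_mul_choose_two_add a
  have h3 := three_mul_choose_three_add a
  have hcliques : ∑ j ∈ range 3, (a + j).choose 3 = (a + 1) * a.choose 2 + a := by
    simp only [sum_range_succ, range_zero, sum_empty, Nat.choose_succ_succ' _ 2, choose_succ_two,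
      add_zero, zero_add]
    lia
  have hgcd : (a.choose 2).gcd ((a + 1).choose 2) * (a + 2).choose 2 ≤
      a * (2 * a + 1 + a.choose 2) := by
    rw [choose_succ_two (a + 1), choose_succ_two a]
    refine Nat.mul_le_mul ?_ (by lia)
    rw [← choose_succ_two]
    exact Nat.le_of_dvd ha (gcd_choose_two_dvd a)
  have hcube : 2 * (a * a.choose 2) + a ^ 2 = a ^ 3 := by
    linear_combination a * h2
  have hlcm := lcm_choose_two_le a
  obtain ⟨x, y, z, hxyz⟩ := exists_mul_add_mul_add_mul_eq_of_lcm_add_le (coprime_gcd_choose_two a)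
    (n := t - ∑ j ∈ range 3, (a + j).choose 3) (by lia)
  refine ⟨([x, y, z].getD · 0), ?_⟩
  have hextra : ∑ j ∈ range 3, [x, y, z].getD j 0 * (a + j).choose 2 =
      x * a.choose 2 + y * (a + 1).choose 2 + z * (a + 2).choose 2 := by
    simp [sum_range_succ]
  rw [sum_add_distrib, hextra]
  lia

end CoinProblem

section PosSemidef

variable {n : Type*} [Fintype n] {M : Matrix n n ℝ}

theorem exists_pos_eigenvalue_le_trace (hM : M.PosSemidef) (htr : 0 < M.trace) :
    ∃ μ, 0 < μ ∧ μ ≤ M.trace ∧ ∃ v : n → ℝ, v ≠ 0 ∧ M *ᵥ v = μ • v := by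
  classical
  have htrace : M.trace = ∑ i, hM.isHermitian.eigenvalues i :=
    hM.isHermitian.trace_eq_sum_eigenvalues
  obtain ⟨i, -, hi⟩ := exists_ne_zero_of_sum_ne_zero (htrace ▸ htr.ne')
  refine ⟨_, (hM.eigenvalues_nonneg i).lt_of_ne' hi, ?_, _,
    (WithLp.ofLp_eq_zero 2).ne.2 (hM.isHermitian.eigenvectorBasis.orthonormal.ne_zero i),
    hM.isHermitian.mulVec_eigenvectorBasis i⟩
  rw [htrace]
  exact single_le_sum (fun j _ => hM.eigenvalues_nonneg j) (mem_univ i)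

theorem le_lambdaMinPos {a : ℝ} (hM : M.PosSemidef) (htr : 0 < M.trace)
    (h : ∀ μ, 0 < μ → ∀ v : n → ℝ, v ≠ 0 → M *ᵥ v = μ • v → a ≤ μ) : a ≤ lambdaMinPos M := by
  obtain ⟨μ, hμ, -, hv⟩ := exists_pos_eigenvalue_le_trace hM htr
  refine le_csInf ⟨μ, hμ, hv⟩ ?_
  rintro ν ⟨hν, v, hv0, hv⟩
  exact h ν hν v hv0 hv

theorem lambdaMinPos_le_trace (hM : M.PosSemidef) (htr : 0 < M.trace) :
    lambdaMinPos M ≤ M.trace := by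
  obtain ⟨μ, hμ, hle, hv⟩ := exists_pos_eigenvalue_le_trace hM htr
  have hbdd : BddBelow {μ : ℝ | 0 < μ ∧ ∃ v : n → ℝ, v ≠ 0 ∧ M *ᵥ v = μ • v} :=
    ⟨0, fun _ h => h.1.le⟩
  exact (csInf_le hbdd ⟨hμ, hv⟩).trans hle

end PosSemidef

section Orientation

/-- The sign of the ordered pair `(x, y)` relative to the natural order; it vanishes for `x = y`. -/
def orient (x y : ℕ) : ℝ := ((y - x : ℤ).sign : ℝ)

theorem orient_swap (x y : ℕ) : orient y x = -orient x y := by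
  rw [orient, orient, ← neg_sub, Int.sign_neg, Int.cast_neg]

theorem orient_of_lt {x y : ℕ} (h : x < y) : orient x y = 1 := by
  rw [orient, Int.sign_eq_one_of_pos (by lia), Int.cast_one]

theorem orient_of_gt {x y : ℕ} (h : y < x) : orient x y = -1 := by
  rw [orient_swap, orient_of_lt h]

theorem orient_mul_self {x y : ℕ} (h : x ≠ y) : orient x y * orient x y = 1 := by
  rcases h.lt_or_gt with h | h
  · simp [orient_of_lt h]
  · simp [orient_of_gt h]

variable {x y z : ℕ}

theorem triSign_triple (hxy : x ≠ y) (hxz : x ≠ z) (hyz : y ≠ z) :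
    triSign {x, y, z} {x, y} = orient x z * orient y z := by
  have hsub : ({x, y} : Finset ℕ) ⊆ {x, y, z} := by grind
  have hsdiff : ({x, y, z} : Finset ℕ) \ {x, y} = {z} := by grind
  have hmax : ({z} : Finset ℕ).max = ({x, y, z} : Finset ℕ).max ↔ x < z ∧ y < z := by
    simp only [max_insert, max_singleton, ← WithBot.coe_max, WithBot.coe_inj]
    lia
  have hmin : ({z} : Finset ℕ).min = ({x, y, z} : Finset ℕ).min ↔ z < x ∧ z < y := by
    simp only [min_insert, min_singleton, ← WithTop.coe_min, WithTop.coe_inj]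
    lia
  rw [triSign, if_pos ⟨hsub, card_pair hxy, card_triple_eq_three_iff.2 ⟨hxy, hxz, hyz⟩⟩]
  simp only [hsdiff, hmax, hmin]
  rcases hxz.lt_or_gt with h | h <;> rcases hyz.lt_or_gt with h' | h' <;>
    simp [h, h', h.not_gt, h'.not_gt, orient_of_lt, orient_of_gt]

/-- The value on a triangle `T` of the coboundary of an edge function `V`. -/
noncomputable def coboundary (V : Finset ℕ → ℝ) (T : Finset ℕ) : ℝ :=
  ∑ e ∈ T.powersetCard 2, triSign T e * V e

theorem coboundary_triple (V : Finset ℕ → ℝ) (hxy : x ≠ y) (hxz : x ≠ z) (hyz : y ≠ z) :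
    coboundary V {x, y, z} = triSign {x, y, z} {x, y} * V {x, y} +
      triSign {x, y, z} {y, z} * V {y, z} + triSign {x, y, z} {z, x} * V {z, x} := by
  have hx : ({x, y} : Finset ℕ) ≠ {y, z} :=
    ne_of_mem_of_not_mem' (mem_insert_self x _) (by simp [hxy, hxz])
  have hy : ({x, y} : Finset ℕ) ≠ {z, x} :=
    ne_of_mem_of_not_mem' (a := y) (by simp) (by simp [hyz, hxy.symm])
  have hz : ({y, z} : Finset ℕ) ≠ {z, x} :=
    ne_of_mem_of_not_mem' (mem_insert_self y _) (by simp [hyz, hxy.symm])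
  have h : ({x, y, z} : Finset ℕ).powersetCard 2 = {{x, y}, {y, z}, {z, x}} := by
    refine (eq_of_subset_of_card_le ?_ ?_).symm
    · simp [insert_subset_iff, mem_powersetCard, *, hxz.symm]
    · simp [card_powersetCard, card_triple_eq_three_iff.2 ⟨hxy, hxz, hyz⟩, *]
  rw [coboundary, h, sum_insert (by simp [*]), sum_insert (by simp [*]), sum_singleton, add_assoc]

theorem orient_mul_triSign_mul_coboundary (V : Finset ℕ → ℝ) (hxy : x ≠ y) (hxz : x ≠ z)
    (hyz : y ≠ z) :
    orient x y * (triSign {x, y, z} {x, y} * coboundary V {x, y, z}) =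
      orient x y * V {x, y} + orient y z * V {y, z} + orient z x * V {z, x} := by
  have h1 : triSign {x, y, z} {y, z} = orient y x * orient z x := by
    rw [← triSign_triple hyz hxy.symm hxz.symm, insert_comm, pair_comm x z]
  have h2 : triSign {x, y, z} {z, x} = orient z y * orient x y := by
    rw [← triSign_triple hxz.symm hyz.symm hxy, insert_comm z x, pair_comm y z]
  rw [coboundary_triple V hxy hxz hyz, triSign_triple hxy hxz hyz, h1, h2, orient_swap x y,
    orient_swap y z, orient_swap z x]
  have hx := orient_mul_self hxy
  have hy := orient_mul_self hyz
  have hz := orient_mul_self hxz.symm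
  grind

theorem coboundary_triSign {T : Finset ℕ} (hT : T.card = 3) : coboundary (triSign T) T = 3 := by
  have hsq : ∀ e ∈ T.powersetCard 2, triSign T e * triSign T e = 1 := by
    intro e he
    obtain ⟨hsub, hcard⟩ := mem_powersetCard.1 he
    rw [triSign, if_pos ⟨hsub, hcard, hT⟩]
    split_ifs <;> norm_num
  rw [coboundary, sum_congr rfl hsq, sum_const, card_powersetCard, hT]
  norm_num

end Orientation

section Cochains

variable {F G : Finset (Finset ℕ)} {S W : Finset ℕ} {x y z : ℕ} {μ : ℝ} {f : ℕ → ℕ → ℝ}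

theorem mem_vertsOf : x ∈ vertsOf F ↔ ∃ T ∈ F, x ∈ T := mem_biUnion

/-- The vertices completing the pair `x`, `y` to a triangle of `F`. -/
def link (F : Finset (Finset ℕ)) (x y : ℕ) : Finset ℕ :=
  (vertsOf F).filter fun z => {x, y, z} ∈ F

theorem mem_link : z ∈ link F x y ↔ {x, y, z} ∈ F := by
  rw [link, mem_filter, and_iff_right_iff_imp]
  exact fun h => mem_vertsOf.2 ⟨_, h, by simp⟩

theorem mem_link_comm : z ∈ link F x y ↔ y ∈ link F x z := by
  rw [mem_link, mem_link, pair_comm]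

/-- An eigenvector of `δ₁ᵀ δ₁` for the eigenvalue `μ`, written as an alternating function on
ordered pairs of vertices, which makes the vertex order disappear from the eigenvalue equation. -/
structure IsEigencochain (F : Finset (Finset ℕ)) (μ : ℝ) (f : ℕ → ℕ → ℝ) : Prop where
  antisymm : ∀ x y, f y x = -f x y
  eigen : ∀ x y, ∑ z ∈ link F x y, (f x y + f y z + f z x) = μ * f x y

namespace IsEigencochain

theorem apply_self (hf : IsEigencochain F μ f) (x : ℕ) : f x x = 0 :=
  self_eq_neg.1 (hf.antisymm x x)

theorem link_nonempty (hf : IsEigencochain F μ f) (hμ : μ ≠ 0) (hxy : f x y ≠ 0) :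
    (link F x y).Nonempty := by
  rw [nonempty_iff_ne_empty]
  intro hempty
  have h := hf.eigen x y
  rw [hempty, sum_empty] at h
  exact mul_ne_zero hμ hxy h.symm

-- The triangle `{x, y, z}` contributes opposite amounts to the equations at `(x, y)` and `(x, z)`.
theorem sum_apply_eq_zero (hf : IsEigencochain F μ f) (hμ : μ ≠ 0) (hW : vertsOf F ⊆ W) (x : ℕ) :
    ∑ y ∈ W, f x y = 0 := by
  have hlink (y : ℕ) : link F x y = W.filter (· ∈ link F x y) := by
    ext z
    rw [mem_filter, iff_and_self]
    exact fun hz => hW (mem_filter.1 hz).1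
  have hmul : μ * ∑ y ∈ W, f x y =
      ∑ y ∈ W, ∑ z ∈ W, if z ∈ link F x y then f x y + f y z + f z x else 0 := by
    rw [mul_sum]
    refine sum_congr rfl fun y _ => ?_
    rw [← sum_filter, ← hlink, hf.eigen]
  have hanti : μ * ∑ y ∈ W, f x y = -(μ * ∑ y ∈ W, f x y) := by
    nth_rw 1 [hmul]
    rw [sum_comm, hmul, ← sum_neg_distrib]
    refine sum_congr rfl fun y _ => ?_
    rw [← sum_neg_distrib]
    refine sum_congr rfl fun z _ => ?_
    simp only [mem_link_comm (y := z) (z := y)]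
    rw [hf.antisymm x y, hf.antisymm x z, hf.antisymm y z]
    split_ifs <;> ring
  exact (mul_eq_zero.1 (self_eq_neg.1 hanti)).resolve_left hμ

theorem mul_eq_sum (hf : IsEigencochain F μ f) (h : link F x y = S \ {x, y}) :
    μ * f x y = ∑ z ∈ S, (f x y + f y z + f z x) := by
  rw [← hf.eigen, h]
  refine sum_subset sdiff_subset fun z hz hz' => ?_
  obtain rfl | rfl : z = x ∨ z = y := by
    simpa [hz, or_iff_not_imp_left] using hz'
  · rw [hf.apply_self, hf.antisymm]
    ring
  · rw [hf.apply_self, hf.antisymm]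
    ring

theorem restrict (hf : IsEigencochain F μ f) (hGF : G ⊆ F)
    (hG : ∀ T ∈ F, ∀ x ∈ T, x ∈ vertsOf G → T ∈ G) :
    IsEigencochain G μ fun x y => if x ∈ vertsOf G ∧ y ∈ vertsOf G then f x y else 0 where
  antisymm x y := by
    simp only [hf.antisymm x y, and_comm (a := y ∈ vertsOf G)]
    split_ifs <;> simp
  eigen x y := by
    by_cases hxy : x ∈ vertsOf G ∧ y ∈ vertsOf G
    · have hlink : link G x y = link F x y := by
        ext z
        rw [mem_link, mem_link]
        exact ⟨fun h => hGF h, fun h => hG _ h x (by simp) hxy.1⟩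
      rw [if_pos hxy, ← hf.eigen, hlink]
      refine sum_congr rfl fun z hz => ?_
      have hzG : z ∈ vertsOf G := (mem_filter.1 (hlink ▸ hz)).1
      rw [if_pos ⟨hxy.2, hzG⟩, if_pos ⟨hzG, hxy.1⟩]
    · have hlink : link G x y = ∅ := by
        refine eq_empty_of_forall_notMem fun z hz => hxy ?_
        have hT := mem_link.1 hz
        exact ⟨mem_vertsOf.2 ⟨_, hT, by simp⟩, mem_vertsOf.2 ⟨_, hT, by simp⟩⟩
      rw [hlink, sum_empty, if_neg hxy, mul_zero]

theorem exists_of_biUnion {ι : Type*} {s : Finset ι} {G : ι → Finset (Finset ℕ)}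
    (hf : IsEigencochain (s.biUnion G) μ f) (hμ : μ ≠ 0) (hf0 : f ≠ 0)
    (hG : (s : Set ι).PairwiseDisjoint fun i => vertsOf (G i)) :
    ∃ i ∈ s, ∃ g ≠ 0, IsEigencochain (G i) μ g := by
  obtain ⟨x, hx⟩ := Function.ne_iff.1 hf0
  obtain ⟨y, hxy⟩ := Function.ne_iff.1 hx
  obtain ⟨z, hz⟩ := hf.link_nonempty hμ hxy
  obtain ⟨i, hi, hT⟩ := mem_biUnion.1 (mem_link.1 hz)
  refine ⟨i, hi, _, ?_, hf.restrict (subset_biUnion_of_mem G hi) ?_⟩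
  · refine Function.ne_iff.2 ⟨x, Function.ne_iff.2 ⟨y, ?_⟩⟩
    rwa [if_pos ⟨mem_vertsOf.2 ⟨_, hT, by simp⟩, mem_vertsOf.2 ⟨_, hT, by simp⟩⟩]
  · intro T hT w hwT hw
    obtain ⟨j, hj, hTj⟩ := mem_biUnion.1 hT
    rwa [hG.elim_finset hi hj w hw (mem_vertsOf.2 ⟨T, hTj, hwT⟩)]

end IsEigencochain

end Cochains

section Bridge

variable {F : Finset (Finset ℕ)}

theorem triSign_eq_zero_of_notMem {T e : Finset ℕ} (h : e ∉ T.powersetCard 2) :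
    triSign T e = 0 :=
  if_neg fun he => h (mem_powersetCard.2 ⟨he.1, he.2.1⟩)

theorem sum_edgesOf_eq_coboundary {T : Finset ℕ} (hT : T ∈ F) (V : Finset ℕ → ℝ) :
    ∑ e ∈ edgesOf F, triSign T e * V e = coboundary V T := by
  have hsub : T.powersetCard 2 ⊆ edgesOf F := subset_biUnion_of_mem _ hT
  refine (sum_subset hsub fun e _ he => ?_).symm
  rw [triSign_eq_zero_of_notMem he, zero_mul]

theorem delta1_mulVec (V : Finset ℕ → ℝ) (T : {T // T ∈ F}) :
    (delta1 F *ᵥ fun e => V e) T = coboundary V T := by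
  rw [← sum_edgesOf_eq_coboundary T.2, ← sum_coe_sort]
  rfl

theorem transpose_mul_delta1_mulVec (V : Finset ℕ → ℝ) (e : {e // e ∈ edgesOf F}) :
    (((delta1 F)ᵀ * delta1 F) *ᵥ fun e => V e) e = ∑ T ∈ F, triSign T e * coboundary V T := by
  rw [← mulVec_mulVec, funext (delta1_mulVec V), ← sum_coe_sort]
  rfl

theorem trace_transpose_mul_delta1 (hF : ∀ T ∈ F, T.card = 3) :
    ((delta1 F)ᵀ * delta1 F).trace = 3 * #F := by
  calc ((delta1 F)ᵀ * delta1 F).trace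
      = ∑ T : {T // T ∈ F}, ∑ e : {e // e ∈ edgesOf F}, triSign T e * triSign T e := by
        rw [trace_mul_comm]
        rfl
    _ = ∑ T ∈ F, ∑ e ∈ edgesOf F, triSign T e * triSign T e := by
        rw [← sum_coe_sort F]
        exact sum_congr rfl fun _ _ => sum_coe_sort (edgesOf F) fun e => triSign _ e * triSign _ e
    _ = #F • (3 : ℝ) := sum_eq_card_nsmul fun _ hT => by
        rw [sum_edgesOf_eq_coboundary hT, coboundary_triSign (hF _ hT)]
    _ = 3 * #F := by rw [nsmul_eq_mul, mul_comm]

theorem ne_of_mem_link (hF : ∀ T ∈ F, T.card = 3) {x y z : ℕ} (hz : z ∈ link F x y) :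
    x ≠ y ∧ x ≠ z ∧ y ≠ z :=
  card_triple_eq_three_iff.1 (hF _ (mem_link.1 hz))

theorem sum_triSign_mul_eq_sum_link (hF : ∀ T ∈ F, T.card = 3) (g : Finset ℕ → ℝ) (x y : ℕ) :
    ∑ T ∈ F, triSign T {x, y} * g T =
      ∑ z ∈ link F x y, triSign {x, y, z} {x, y} * g {x, y, z} := by
  have hinj : Set.InjOn (fun z => ({x, y, z} : Finset ℕ)) (link F x y) := by
    intro z hz w _ h
    obtain ⟨-, hxz, hyz⟩ := ne_of_mem_link hF hz
    have : z ∈ ({x, y, w} : Finset ℕ) := h.le (by simp)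
    simpa [hxz.symm, hyz.symm] using this
  rw [← sum_image (f := fun T => triSign T {x, y} * g T) hinj]
  refine (sum_subset ?_ ?_).symm
  · exact image_subset_iff.2 fun z hz => mem_link.1 hz
  intro T hT hTlink
  rw [triSign_eq_zero_of_notMem, zero_mul]
  intro he
  obtain ⟨hsub, hcard⟩ := mem_powersetCard.1 he
  obtain ⟨z, hz⟩ : ∃ z, T \ {x, y} = {z} := by
    rw [← card_eq_one, card_sdiff_of_subset hsub, hcard, hF T hT]
  have hTz : T = {x, y, z} := by
    rw [← union_sdiff_of_subset hsub, hz, insert_union, singleton_union]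
  exact hTlink (mem_image.2 ⟨z, mem_link.2 (hTz ▸ hT), hTz.symm⟩)

theorem exists_edge_eigenfunction {μ : ℝ} {v : {e // e ∈ edgesOf F} → ℝ} (hv : v ≠ 0)
    (hμ : ((delta1 F)ᵀ * delta1 F) *ᵥ v = μ • v) :
    ∃ V : Finset ℕ → ℝ, (∃ e ∈ edgesOf F, V e ≠ 0) ∧
      ∀ e, ∑ T ∈ F, triSign T e * coboundary V T = μ * V e := by
  have hext : (fun e : {e // e ∈ edgesOf F} => Function.extend Subtype.val v 0 e.1) = v :=
    funext fun e => Subtype.val_injective.extend_apply v 0 e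
  refine ⟨Function.extend Subtype.val v 0, ?_, fun e => ?_⟩
  · obtain ⟨e, he⟩ := Function.ne_iff.1 hv
    exact ⟨e, e.2, by rwa [Subtype.val_injective.extend_apply]⟩
  by_cases he : e ∈ edgesOf F
  · rw [← transpose_mul_delta1_mulVec _ ⟨e, he⟩, hext, hμ,
      Subtype.val_injective.extend_apply v 0 ⟨e, he⟩]
    rfl
  · rw [Function.extend_apply' _ _ _ fun ⟨e', h⟩ => he (h ▸ e'.2), Pi.zero_apply, mul_zero]
    refine sum_eq_zero fun _ hT => ?_
    rw [triSign_eq_zero_of_notMem fun h => he (mem_biUnion.2 ⟨_, hT, h⟩), zero_mul]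

theorem exists_isEigencochain (hF : ∀ T ∈ F, T.card = 3) {μ : ℝ} {v : {e // e ∈ edgesOf F} → ℝ}
    (hv : v ≠ 0) (hμ : ((delta1 F)ᵀ * delta1 F) *ᵥ v = μ • v) :
    ∃ f ≠ 0, IsEigencochain F μ f := by
  obtain ⟨V, ⟨e, he, hVe⟩, hV⟩ := exists_edge_eigenfunction hv hμ
  refine ⟨fun x y => orient x y * V {x, y}, ?_, ⟨fun x y => ?_, fun x y => ?_⟩⟩
  · obtain ⟨T, -, heT⟩ := mem_biUnion.1 he
    obtain ⟨x, y, hxy, rfl⟩ := card_eq_two.1 (mem_powersetCard.1 heT).2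
    refine Function.ne_iff.2 ⟨x, Function.ne_iff.2 ⟨y, mul_ne_zero ?_ hVe⟩⟩
    exact left_ne_zero_of_mul_eq_one (orient_mul_self hxy)
  · rw [orient_swap, pair_comm, neg_mul]
  rcases eq_or_ne x y with rfl | hxy
  · rw [eq_empty_of_forall_notMem fun z hz => (ne_of_mem_link hF hz).1 rfl]
    simp [orient]
  calc ∑ z ∈ link F x y, (orient x y * V {x, y} + orient y z * V {y, z} + orient z x * V {z, x})
      = ∑ z ∈ link F x y,
          orient x y * (triSign {x, y, z} {x, y} * coboundary V {x, y, z}) := by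
        refine sum_congr rfl fun z hz => ?_
        obtain ⟨-, hxz, hyz⟩ := ne_of_mem_link hF hz
        rw [orient_mul_triSign_mul_coboundary V hxy hxz hyz]
    _ = orient x y * (μ * V {x, y}) := by
        rw [← mul_sum, ← sum_triSign_mul_eq_sum_link hF, hV]
    _ = μ * (orient x y * V {x, y}) := mul_left_comm ..

theorem posSemidef_transpose_mul_delta1 (F : Finset (Finset ℕ)) :
    ((delta1 F)ᵀ * delta1 F).PosSemidef := by
  rw [← conjTranspose_eq_transpose_of_trivial]
  exact posSemidef_conjTranspose_mul_self _

theorem trace_transpose_mul_delta1_pos (hF : IsTriFam F) : 0 < ((delta1 F)ᵀ * delta1 F).trace := by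
  rw [trace_transpose_mul_delta1 hF.2]
  have := hF.1.card_pos
  positivity

theorem le_lam (hF : IsTriFam F) {a : ℝ}
    (h : ∀ μ, 0 < μ → ∀ f ≠ 0, IsEigencochain F μ f → a ≤ μ) : a ≤ lam F := by
  refine le_lambdaMinPos (posSemidef_transpose_mul_delta1 F) (trace_transpose_mul_delta1_pos hF) ?_
  intro μ hμ v hv0 hv
  obtain ⟨f, hf0, hf⟩ := exists_isEigencochain hF.2 hv0 hv
  exact h μ hμ f hf0 hf

theorem lam_le_three_mul_card (hF : IsTriFam F) : lam F ≤ 3 * #F := by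
  rw [← trace_transpose_mul_delta1 hF.2]
  exact lambdaMinPos_le_trace (posSemidef_transpose_mul_delta1 F)
    (trace_transpose_mul_delta1_pos hF)

theorem lam_le_phi (hF : IsTriFam F) : lam F ≤ phi #F := by
  refine le_csSup ⟨3 * #F, ?_⟩ ⟨F, hF, rfl, rfl⟩
  rintro _ ⟨G, hG, hcard, rfl⟩
  exact hcard ▸ lam_le_three_mul_card hG

end Bridge

section Join

variable {C B T : Finset ℕ} {u w i : ℕ}

/-- The 3-cliques of the join of the complete graph on `C` with the edgeless graph on `B`; the
family `Tcb c b` is the case of two consecutive intervals. -/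
def joinFamily (C B : Finset ℕ) : Finset (Finset ℕ) :=
  C.powersetCard 3 ∪ B.biUnion fun i => (C.powersetCard 2).image (insert i)

theorem mem_joinFamily (h : Disjoint C B) :
    T ∈ joinFamily C B ↔
      #T = 3 ∧ T ⊆ C ∪ B ∧ ∀ x ∈ T, ∀ y ∈ T, x ≠ y → x ∈ C ∨ y ∈ C := by
  simp only [joinFamily, mem_union, mem_biUnion, mem_image, mem_powersetCard]
  constructor
  · rintro (⟨hT, hcard⟩ | ⟨i, hi, p, ⟨hp, hcard⟩, rfl⟩)
    · exact ⟨hcard, hT.trans subset_union_left, fun x hx _ _ _ => .inl (hT hx)⟩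
    · have hip : i ∉ p := fun hip => disjoint_left.1 h (hp hip) hi
      refine ⟨by rw [card_insert_of_notMem hip, hcard], ?_, ?_⟩ <;> grind
  · rintro ⟨hcard, hT, hclique⟩
    by_cases hTC : T ⊆ C
    · exact .inl ⟨hTC, hcard⟩
    · obtain ⟨i, hiT, hiC⟩ := not_subset.1 hTC
      have hiB : i ∈ B := (mem_union.1 (hT hiT)).resolve_left hiC
      refine .inr ⟨i, hiB, T.erase i, ⟨?_, ?_⟩, insert_erase hiT⟩
      · grind
      · rw [card_erase_of_mem hiT, hcard]

theorem card_joinFamily (h : Disjoint C B) :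
    #(joinFamily C B) = (#C).choose 3 + #B * (#C).choose 2 := by
  have hnot {i : ℕ} (hi : i ∈ B) {p : Finset ℕ} (hp : p ∈ C.powersetCard 2) : i ∉ p :=
    fun hip => disjoint_right.1 h hi ((mem_powersetCard.1 hp).1 hip)
  have hcliques : Disjoint (C.powersetCard 3)
      (B.biUnion fun i => (C.powersetCard 2).image (insert i)) := by
    simp only [disjoint_left, mem_biUnion, mem_image, mem_powersetCard]
    rintro T ⟨hT, -⟩ ⟨i, hi, p, -, rfl⟩
    exact disjoint_right.1 h hi (hT (mem_insert_self i p))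
  have happexes : (B : Set ℕ).PairwiseDisjoint fun i => (C.powersetCard 2).image (insert i) := by
    intro i hi j _ hij
    simp only [Function.onFun, disjoint_left, mem_image]
    rintro _ ⟨p, -, rfl⟩ ⟨q, hq, hpq⟩
    have hiq : i ∈ insert j q := hpq ▸ mem_insert_self i p
    exact (mem_insert.1 hiq).elim hij (hnot hi hq)
  have hcard : ∀ i ∈ B, #((C.powersetCard 2).image (insert i)) = (#C).choose 2 := by
    intro i hi
    rw [card_image_of_injOn, card_powersetCard]
    intro p hp q hq hpq
    rw [← erase_insert (hnot hi hp), hpq, erase_insert (hnot hi hq)]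
  rw [joinFamily, card_union_of_disjoint hcliques, card_biUnion happexes, sum_const_nat hcard,
    card_powersetCard]

theorem vertsOf_joinFamily_subset (h : Disjoint C B) : vertsOf (joinFamily C B) ⊆ C ∪ B :=
  biUnion_subset.2 fun _ hT => ((mem_joinFamily h).1 hT).2.1

theorem link_joinFamily_of_mem_of_mem (h : Disjoint C B) (hu : u ∈ C) (hw : w ∈ C) (huw : u ≠ w) :
    link (joinFamily C B) u w = (C ∪ B) \ {u, w} := by
  ext z
  rw [mem_link, mem_joinFamily h, card_triple_eq_three_iff]
  grind

theorem link_joinFamily_of_mem_right (h : Disjoint C B) (hu : u ∈ C) (hi : i ∈ B) :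
    link (joinFamily C B) u i = C \ {u, i} := by
  have hiC : i ∉ C := disjoint_right.1 h hi
  ext z
  rw [mem_link, mem_joinFamily h, card_triple_eq_three_iff]
  grind

variable {μ : ℝ} {f : ℕ → ℕ → ℝ}

theorem IsEigencochain.joinFamily_mul_eq_of_mem_of_mem
    (hf : IsEigencochain (joinFamily C B) μ f) (h : Disjoint C B) (hμ : μ ≠ 0)
    (hu : u ∈ C) (hw : w ∈ C) : μ * f u w = (#C + #B) * f u w := by
  rcases eq_or_ne u w with rfl | huw
  · simp [hf.apply_self]
  have hsum := hf.sum_apply_eq_zero hμ (vertsOf_joinFamily_subset h)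
  calc μ * f u w
      = ∑ z ∈ C ∪ B, (f u w + f w z + f z u) :=
        hf.mul_eq_sum (link_joinFamily_of_mem_of_mem h hu hw huw)
    _ = #(C ∪ B) * f u w + ∑ z ∈ C ∪ B, f w z - ∑ z ∈ C ∪ B, f u z := by
        simp only [hf.antisymm u, ← sub_eq_add_neg, sum_sub_distrib, sum_add_distrib, sum_const,
          nsmul_eq_mul]
    _ = (#C + #B) * f u w := by
        rw [hsum, hsum, card_union_of_disjoint h, Nat.cast_add, add_zero, sub_zero]

theorem IsEigencochain.mem_of_joinFamily_ne_zero
    (hf : IsEigencochain (joinFamily C B) μ f) (h : Disjoint C B) (hμ : μ ≠ 0)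
    {x y : ℕ} (hxy : f x y ≠ 0) :
    x ∈ C ∧ y ∈ C ∨ x ∈ C ∧ y ∈ B ∨ x ∈ B ∧ y ∈ C := by
  obtain ⟨z, hz⟩ := hf.link_nonempty hμ hxy
  have hne : x ≠ y := fun hxy' => hxy (hxy' ▸ hf.apply_self x)
  obtain ⟨-, hsub, hclique⟩ := (mem_joinFamily h).1 (mem_link.1 hz)
  grind

theorem IsEigencochain.joinFamily_mul_eq_of_mem_right
    (hf : IsEigencochain (joinFamily C B) μ f) (h : Disjoint C B) (hμ : μ ≠ 0)
    (hC : ∀ u ∈ C, ∀ w ∈ C, f u w = 0) (hu : u ∈ C) (hi : i ∈ B) :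
    μ * f u i = #C * f u i := by
  have hsumC : ∑ z ∈ C, f i z = 0 := by
    rw [← hf.sum_apply_eq_zero hμ (vertsOf_joinFamily_subset h) i]
    refine sum_subset subset_union_left fun z _ hz => ?_
    by_contra hiz
    have hiC := disjoint_right.1 h hi
    have hor := hf.mem_of_joinFamily_ne_zero h hμ hiz
    tauto
  calc μ * f u i
      = ∑ z ∈ C, (f u i + f i z + f z u) :=
        hf.mul_eq_sum (link_joinFamily_of_mem_right h hu hi)
    _ = #C * f u i + ∑ z ∈ C, f i z := by
        rw [sum_add_distrib, sum_add_distrib, sum_const, nsmul_eq_mul,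
          sum_eq_zero fun z hz => hC z hz u hu, add_zero]
    _ = #C * f u i := by rw [hsumC, add_zero]

theorem IsEigencochain.eq_or_eq_of_joinFamily
    (hf : IsEigencochain (joinFamily C B) μ f) (h : Disjoint C B) (hμ : μ ≠ 0) (hf0 : f ≠ 0) :
    μ = #C ∨ μ = #C + #B := by
  by_contra! hne
  have hC : ∀ u ∈ C, ∀ w ∈ C, f u w = 0 := fun u hu w hw =>
    (mul_eq_mul_right_iff.1 (hf.joinFamily_mul_eq_of_mem_of_mem h hμ hu hw)).resolve_left hne.2
  have hCB : ∀ u ∈ C, ∀ i ∈ B, f u i = 0 := fun u hu i hi =>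
    (mul_eq_mul_right_iff.1 (hf.joinFamily_mul_eq_of_mem_right h hμ hC hu hi)).resolve_left hne.1
  refine hf0 (funext₂ fun x y => ?_)
  by_contra hxy
  rcases hf.mem_of_joinFamily_ne_zero h hμ hxy with ⟨hx, hy⟩ | ⟨hx, hy⟩ | ⟨hx, hy⟩
  · exact hxy (hC x hx y hy)
  · exact hxy (hCB x hx y hy)
  · exact hxy ((hf.antisymm y x).trans (neg_eq_zero.2 (hCB y hy x hx)))

end Join

section DisjointJoins

variable {s : Finset ℕ} {c b : ℕ → ℕ}

theorem pair_right_injective (j : ℕ) : Function.Injective (Nat.pair j) :=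
  fun _ _ h => (Nat.pair_eq_pair.1 h).2

/-- A copy of the join of `K_c` with `b` isolated vertices on numbers of the form `Nat.pair j k`,
so that copies with different labels `j` are vertex-disjoint. -/
def labeledJoin (j c b : ℕ) : Finset (Finset ℕ) :=
  joinFamily ((range c).image (Nat.pair j)) ((Ico c (c + b)).image (Nat.pair j))

theorem disjoint_image_pair (j c b : ℕ) :
    Disjoint ((range c).image (Nat.pair j)) ((Ico c (c + b)).image (Nat.pair j)) := by
  rw [disjoint_image (pair_right_injective j), range_eq_Ico]
  exact Ico_disjoint_Ico_consecutive ..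

theorem card_labeledJoin (j c b : ℕ) : #(labeledJoin j c b) = c.choose 3 + b * c.choose 2 := by
  rw [labeledJoin, card_joinFamily (disjoint_image_pair j c b),
    card_image_of_injective _ (pair_right_injective j),
    card_image_of_injective _ (pair_right_injective j), card_range, Nat.card_Ico,
    Nat.add_sub_cancel_left]

theorem card_eq_three_of_mem_labeledJoin {j c b : ℕ} {T : Finset ℕ} (hT : T ∈ labeledJoin j c b) :
    #T = 3 :=
  ((mem_joinFamily (disjoint_image_pair j c b)).1 hT).1

theorem unpair_fst_of_mem_vertsOf_labeledJoin {j c b x : ℕ} (hx : x ∈ vertsOf (labeledJoin j c b)) :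
    x.unpair.1 = j := by
  have hx' := vertsOf_joinFamily_subset (disjoint_image_pair j c b) hx
  rw [← image_union] at hx'
  obtain ⟨k, -, rfl⟩ := mem_image.1 hx'
  rw [Nat.unpair_pair]

theorem IsEigencochain.eq_or_eq_of_labeledJoin {j c b : ℕ} {μ : ℝ} {f : ℕ → ℕ → ℝ}
    (hf : IsEigencochain (labeledJoin j c b) μ f) (hμ : μ ≠ 0) (hf0 : f ≠ 0) :
    μ = c ∨ μ = c + b := by
  have h := hf.eq_or_eq_of_joinFamily (disjoint_image_pair j c b) hμ hf0
  rwa [card_image_of_injective _ (pair_right_injective j),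
    card_image_of_injective _ (pair_right_injective j), card_range, Nat.card_Ico,
    Nat.add_sub_cancel_left] at h

variable {s : Finset ℕ} {c b : ℕ → ℕ}

/-- The vertex-disjoint union over `j ∈ s` of joins of `K_(c j)` with `b j` isolated vertices. -/
def disjointJoins (s : Finset ℕ) (c b : ℕ → ℕ) : Finset (Finset ℕ) :=
  s.biUnion fun j => labeledJoin j (c j) (b j)

theorem pairwiseDisjoint_vertsOf_labeledJoin (s : Finset ℕ) (c b : ℕ → ℕ) :
    (s : Set ℕ).PairwiseDisjoint fun j => vertsOf (labeledJoin j (c j) (b j)) :=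
  fun _ _ _ _ hij => disjoint_left.2 fun _ hi hj =>
    hij ((unpair_fst_of_mem_vertsOf_labeledJoin hi).symm.trans
      (unpair_fst_of_mem_vertsOf_labeledJoin hj))

theorem card_disjointJoins (s : Finset ℕ) (c b : ℕ → ℕ) :
    #(disjointJoins s c b) = ∑ j ∈ s, ((c j).choose 3 + b j * (c j).choose 2) := by
  have hdisj : (s : Set ℕ).PairwiseDisjoint fun j => labeledJoin j (c j) (b j) := by
    refine fun i hi j hj hij => disjoint_left.2 fun T hTi hTj => ?_
    obtain ⟨x, hx⟩ : T.Nonempty := card_pos.1 (by simp [card_eq_three_of_mem_labeledJoin hTi])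
    exact disjoint_left.1 (pairwiseDisjoint_vertsOf_labeledJoin s c b hi hj hij)
      (mem_vertsOf.2 ⟨T, hTi, hx⟩) (mem_vertsOf.2 ⟨T, hTj, hx⟩)
  rw [disjointJoins, card_biUnion hdisj]
  exact sum_congr rfl fun j _ => card_labeledJoin j (c j) (b j)

theorem IsEigencochain.le_of_disjointJoins {a : ℕ} {μ : ℝ} {f : ℕ → ℕ → ℝ}
    (hf : IsEigencochain (disjointJoins s c b) μ f) (hc : ∀ j ∈ s, a ≤ c j) (hμ : 0 < μ)
    (hf0 : f ≠ 0) : a ≤ μ := by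
  obtain ⟨j, hj, g, hg0, hg⟩ :=
    hf.exists_of_biUnion hμ.ne' hf0 (pairwiseDisjoint_vertsOf_labeledJoin s c b)
  have hac : (a : ℝ) ≤ c j := Nat.cast_le.2 (hc j hj)
  rcases hg.eq_or_eq_of_labeledJoin hμ.ne' hg0 with rfl | rfl
  · exact hac
  · exact hac.trans (le_add_of_nonneg_right (Nat.cast_nonneg _))

theorem le_phi_sum_choose {a : ℕ} (hc : ∀ j ∈ s, a ≤ c j)
    (hpos : 0 < ∑ j ∈ s, ((c j).choose 3 + b j * (c j).choose 2)) :
    a ≤ phi (∑ j ∈ s, ((c j).choose 3 + b j * (c j).choose 2)) := by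
  rw [← card_disjointJoins] at hpos ⊢
  have hF : IsTriFam (disjointJoins s c b) :=
    ⟨card_pos.1 hpos, fun _ hT =>
      have ⟨_, _, hTj⟩ := mem_biUnion.1 hT
      card_eq_three_of_mem_labeledJoin hTj⟩
  exact (le_lam hF fun μ hμ f hf0 hf =>
    hf.le_of_disjointJoins hc hμ hf0).trans (lam_le_phi hF)

end DisjointJoins

theorem stmt18_general (a : ℕ) (ha : 1 ≤ a) (t : ℕ) (ht : 3 * a ^ 3 + 3 * a ^ 2 + 2 * a ≤ 2 * t) :
    (a : ℝ) ≤ phi t := by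
  obtain ⟨b, rfl⟩ := exists_sum_choose_eq ha ht
  exact le_phi_sum_choose (fun _ _ => Nat.le_add_right _ _) (by lia)

/-- For every `a ≥ 3` and every `t ≥ 2a³ + 2a² + 1`, `φ(t) ≥ a`. -/
theorem stmt18 (a : ℕ) (ha : 3 ≤ a) (t : ℕ) (ht : 2 * a ^ 3 + 2 * a ^ 2 + 1 ≤ t) :
    (a : ℝ) ≤ phi t :=
  stmt18_general a (by lia) t (by nlinarith)
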